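/- arXiv:1805.12232 — 2 statements merged into one kernel-verified Lean document; each statement's English description precedes it below -/
import Mathlib

section
/- Suppose f is locally smooth relative to h on 𝒳, and let τ ∈ (0,1). Fix x ∈ 𝒳̃, and for each α > 0 let x(α) ∈ 𝒳̃ be the unique minimizer over 𝒳 of z ↦ α⟨∇f(x), z − x⟩ + D_h(z, x); assume α ↦ x(α) is continuous on [0, ∞) with x(0) = x. Then there exists α_x > 0 such that f(x(α)) ≤ f(x) + τ⟨∇f(x), x(α) − x⟩ for all α ∈ (0, α_x]. In particular, the Armijo line search procedure terminates after finitely many backtracking steps. -/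
open scoped RealInnerProductSpace

/-!
Write `g = f'(x(α) - x)`, with `f'` the derivative of `f` at `x`. Comparing the minimizer `x(α)`
with the feasible point `x` gives `D_h(x(α), x) ≤ -α g`, and `D_h ≥ 0` by convexity, so `g ≤ 0`.
For small `α` relative smoothness at `x` applies to `x(α)`, with a constant `L`, so
`f(x(α)) ≤ f(x) + g + L D_h(x(α), x) ≤ f(x) + (1 - L α) g`, and since `g ≤ 0` this is at most
`f(x) + τ g` as soon as `L α ≤ 1 - τ`.
-/

open Set Filter Topology

section

variable {E : Type*} [NormedAddCommGroup E] [NormedSpace ℝ E]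

/-- The Bregman divergence `D_h(z, x)` induced by `h`. The derivative `h'` of `h` at the base point
`x` is an argument, so that `x` may be a boundary point of the domain of `h`, where `fderiv` carries
no information. -/
def bregmanDiv (h : E → ℝ) (h' : E →L[ℝ] ℝ) (z x : E) : ℝ :=
  h z - h x - h' (z - x)

/-- Local smoothness of `f` relative to `h` on `X`, at the point `x`; `f'` and `h'` are the
derivatives of `f` and `h` at `x`. The usual notion bounds `f z₂` from all base points `z₁` near
`x`; here only the base point `z₁ = x` is considered. -/
def IsLocallySmoothRelAt (X : Set E) (f : E → ℝ) (f' : E →L[ℝ] ℝ) (h : E → ℝ) (h' : E →L[ℝ] ℝ)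
    (x : E) : Prop :=
  ∃ L ≥ 0, ∀ᶠ z in 𝓝[X] x, f z ≤ f x + f' (z - x) + L * bregmanDiv h h' z x

/-- `y` is a mirror descent step on `X` from `x` with step size `α`: a minimizer over `X` of the
linear model `φ`, standing for the derivative of the objective at `x`, regularized by the Bregman
divergence of `h`. -/
structure IsMirrorStep (X : Set E) (φ : E →L[ℝ] ℝ) (h : E → ℝ) (h' : E →L[ℝ] ℝ) (x : E) (α : ℝ)
    (y : E) : Prop where
  mem : y ∈ X
  isMinOn : IsMinOn (fun z => α * φ (z - x) + bregmanDiv h h' z x) X y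

variable {X : Set E} {h : E → ℝ} {h' φ : E →L[ℝ] ℝ} {x y : E} {α : ℝ}

@[simp]
theorem bregmanDiv_self (h : E → ℝ) (h' : E →L[ℝ] ℝ) (x : E) : bregmanDiv h h' x x = 0 := by
  simp [bregmanDiv]

theorem bregmanDiv_nonneg (hh : ConvexOn ℝ X h) (hh' : HasFDerivWithinAt h h' X x)
    (hx : x ∈ X) (hy : y ∈ X) : 0 ≤ bregmanDiv h h' y x := by
  let ℓ : ℝ →ᵃ[ℝ] E := AffineMap.lineMap x y
  have hℓ0 : ℓ 0 = x := AffineMap.lineMap_apply_zero x y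
  have hℓ1 : ℓ 1 = y := AffineMap.lineMap_apply_one x y
  have hderiv : HasDerivWithinAt (h ∘ ℓ) (h' (y - x)) (ℓ ⁻¹' X) 0 :=
    HasFDerivWithinAt.comp_hasDerivWithinAt 0 (hℓ0.symm ▸ hh')
      AffineMap.hasDerivWithinAt_lineMap (mapsTo_preimage ℓ X)
  have hslope : h' (y - x) ≤ slope (h ∘ ℓ) 0 1 :=
    (hh.comp_affineMap ℓ).le_slope_of_hasDerivWithinAt (by simpa [hℓ0]) (by simpa [hℓ1])
      one_pos hderiv
  have hslope_eq : slope (h ∘ ℓ) 0 1 = h y - h x := by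
    simp [slope_def_field, hℓ0, hℓ1]
  exact sub_nonneg.2 (hslope.trans_eq hslope_eq)

namespace IsMirrorStep

theorem bregmanDiv_le (hy : IsMirrorStep X φ h h' x α y) (hx : x ∈ X) :
    bregmanDiv h h' y x ≤ -(α * φ (y - x)) := by
  have hle : α * φ (y - x) + bregmanDiv h h' y x ≤ 0 := by
    simpa using isMinOn_iff.1 hy.isMinOn x hx
  linarith

theorem apply_sub_nonpos (hy : IsMirrorStep X φ h h' x α y) (hh : ConvexOn ℝ X h)
    (hh' : HasFDerivWithinAt h h' X x) (hx : x ∈ X) (hα : 0 < α) : φ (y - x) ≤ 0 := by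
  have hneg : 0 ≤ -(α * φ (y - x)) :=
    (bregmanDiv_nonneg hh hh' hx hy.mem).trans (hy.bregmanDiv_le hx)
  exact nonpos_of_mul_nonpos_right (neg_nonneg.1 hneg) hα

theorem armijo {f : E → ℝ} {L τ : ℝ} (hy : IsMirrorStep X φ h h' x α y) (hh : ConvexOn ℝ X h)
    (hh' : HasFDerivWithinAt h h' X x) (hx : x ∈ X) (hα : 0 < α) (hL : 0 ≤ L)
    (hLα : L * α ≤ 1 - τ) (hf : f y ≤ f x + φ (y - x) + L * bregmanDiv h h' y x) :
    f y ≤ f x + τ * φ (y - x) :=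
  calc
    f y ≤ f x + φ (y - x) + L * bregmanDiv h h' y x := hf
    _ ≤ f x + φ (y - x) + L * -(α * φ (y - x)) := by
      gcongr
      exact hy.bregmanDiv_le hx
    _ = f x + (1 - L * α) * φ (y - x) := by ring
    _ ≤ f x + τ * φ (y - x) :=
      add_le_add le_rfl <| mul_le_mul_of_nonpos_right (le_sub_comm.1 hLα) <|
        hy.apply_sub_nonpos hh hh' hx hα

end IsMirrorStep

theorem stmt4_general {f : E → ℝ} {f' : E →L[ℝ] ℝ} {τ : ℝ} {y : ℝ → E}
    (_hf' : HasFDerivWithinAt f f' X x) (hh : ConvexOn ℝ X h)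
    (hh' : HasFDerivWithinAt h h' X x) (hfh : IsLocallySmoothRelAt X f f' h h' x) (hτ : τ < 1)
    (hx : x ∈ X) (hy : ∀ α, 0 < α → IsMirrorStep X f' h h' x α (y α))
    (hlim : Tendsto y (𝓝[>] 0) (𝓝 x)) :
    ∃ αx > (0 : ℝ), ∀ α : ℝ, 0 < α → α ≤ αx → f (y α) ≤ f x + τ * f' (y α - x) := by
  obtain ⟨L, hL, hsmooth⟩ := hfh
  have hpos : ∀ᶠ α : ℝ in 𝓝[>] 0, 0 < α := eventually_mem_nhdsWithin
  have hlimX : Tendsto y (𝓝[>] 0) (𝓝[X] x) :=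
    tendsto_nhdsWithin_iff.2 ⟨hlim, hpos.mono fun α hα => (hy α hα).mem⟩
  have hLlim : Tendsto (fun α => L * α) (𝓝[>] 0) (𝓝 0) :=
    ((continuous_const_mul L).tendsto' 0 0 (mul_zero L)).mono_left nhdsWithin_le_nhds
  have harmijo : ∀ᶠ α in 𝓝[>] 0, f (y α) ≤ f x + τ * f' (y α - x) := by
    filter_upwards [hpos, hlimX.eventually hsmooth, hLlim.eventually_le_const (sub_pos.2 hτ)]
      with α hα hfα hLα
    exact (hy α hα).armijo hh hh' hx hα hL hLα hfα
  obtain ⟨αx, hαx, hsub⟩ := mem_nhdsGT_iff_exists_Ioc_subset.1 harmijo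
  exact ⟨αx, hαx, fun α hα hle => hsub ⟨hα, hle⟩⟩

end

/-- Finite termination of Armijo line search.
Suppose `f` is locally smooth relative to `h` on `𝒳`, and let `τ ∈ (0,1)`.
Fix `x ∈ 𝒳̃`, and for each `α > 0` let `x(α) ∈ 𝒳̃` be the unique minimizer over `𝒳` of
`z ↦ α⟨∇f(x), z − x⟩ + D_h(z, x)`; assume `α ↦ x(α)` is continuous on `[0, ∞)` with
`x(0) = x`.  Then there exists `α_x > 0` such that
`f(x(α)) ≤ f(x) + τ⟨∇f(x), x(α) − x⟩` for all `α ∈ (0, α_x]`.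
(In particular, the Armijo line search terminates after finitely many backtracking steps.) -/
theorem stmt4 {d : ℕ} (X : Set (EuclideanSpace ℝ (Fin d)))
    (hXne : X.Nonempty) (hXcl : IsClosed X) (hXcv : Convex ℝ X)
    (f h : EuclideanSpace ℝ (Fin d) → ℝ)
    (f' h' : EuclideanSpace ℝ (Fin d) → EuclideanSpace ℝ (Fin d))
    (hf : ConvexOn ℝ X f) (hh : ConvexOn ℝ X h) (hhs : StrictConvexOn ℝ X h)
    (hf' : ∀ y ∈ X, HasGradientAt f (f' y) y)
    (hh' : ∀ y ∈ X, HasGradientAt h (h' y) y)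
    (D : EuclideanSpace ℝ (Fin d) → EuclideanSpace ℝ (Fin d) → ℝ)
    (hD : ∀ z₂ z₁, D z₂ z₁ = h z₂ - h z₁ - ⟪h' z₁, z₂ - z₁⟫)
    (hsmooth : ∀ y ∈ X, ∃ L > (0 : ℝ), ∃ ε > (0 : ℝ),
      ∀ z₁ ∈ Metric.ball y ε ∩ X, ∀ z₂ ∈ Metric.ball y ε ∩ X,
        f z₂ ≤ f z₁ + ⟪f' z₁, z₂ - z₁⟫ + L * D z₂ z₁)
    (τ : ℝ) (hτ : τ ∈ Set.Ioo (0 : ℝ) 1)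
    (x : EuclideanSpace ℝ (Fin d)) (hx : x ∈ X)
    (xmap : ℝ → EuclideanSpace ℝ (Fin d))
    (hmem : ∀ α : ℝ, 0 < α → xmap α ∈ X)
    (hmin : ∀ α : ℝ, 0 < α → ∀ z ∈ X,
      α * ⟪f' x, xmap α - x⟫ + D (xmap α) x ≤ α * ⟪f' x, z - x⟫ + D z x)
    (huniq : ∀ α : ℝ, 0 < α → ∀ z ∈ X,
      α * ⟪f' x, z - x⟫ + D z x = α * ⟪f' x, xmap α - x⟫ + D (xmap α) x → z = xmap α)
    (hcont : ContinuousOn xmap (Set.Ici (0 : ℝ)))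
    (hzero : xmap 0 = x) :
    ∃ αx > (0 : ℝ), ∀ α : ℝ, 0 < α → α ≤ αx →
      f (xmap α) ≤ f x + τ * ⟪f' x, xmap α - x⟫ := by
  obtain ⟨L, hL, ε, hε, hsm⟩ := hsmooth x hx
  obtain rfl : D = fun z₂ z₁ => bregmanDiv h (InnerProductSpace.toDual ℝ _ (h' z₁)) z₂ z₁ :=
    funext₂ hD
  have hfh : IsLocallySmoothRelAt X f (InnerProductSpace.toDual ℝ _ (f' x)) h
      (InnerProductSpace.toDual ℝ _ (h' x)) x :=
    ⟨L, hL.le, mem_of_superset (inter_mem_nhdsWithin X (Metric.ball_mem_nhds x hε))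
      fun z hz => hsm x ⟨Metric.mem_ball_self hε, hx⟩ z hz.symm⟩
  have hlim : Tendsto xmap (𝓝[>] 0) (𝓝 x) :=
    hzero ▸ (hcont 0 self_mem_Ici).mono_left (nhdsWithin_mono 0 Ioi_subset_Ici_self)
  exact stmt4_general (hf' x hx).hasFDerivAt.hasFDerivWithinAt hh
    (hh' x hx).hasFDerivAt.hasFDerivWithinAt hfh hτ.2 hx
    (fun α hα => ⟨hmem α hα, hmin α hα⟩) hlim
end

section
/- Let M₁, …, M_n be positive semi-definite d × d complex matrices. The quantum state tomography objective f_QST(x) := −Σ_{i=1}^n log tr(M_i x) is locally smooth relative to the negative von Neumann entropy h(x) := Re tr(x · log x) on the set 𝒟 of density matrices: for every x ∈ 𝒟 with tr(M_i x) > 0 for all i, there exist L_x > 0 and ε_x > 0 such that f_QST(z₂) ≤ f_QST(z₁) + ⟨∇f_QST(z₁), z₂ − z₁⟩ + L_x D_h(z₂, z₁) for all positive-definite z₁, z₂ ∈ B(x, ε_x) ∩ 𝒟 with tr(M_i z_l) > 0 for all i, l, where D_h(z₂, z₁) := Re tr(z₂ (log z₂ − log z₁)) is the quantum relative entropy and log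 denotes the matrix logarithm (continuous functional calculus of the real logarithm on positive-definite matrices). -/
/-!
Let `p i`, `q j` be the eigenvalues of `B`, `A` and `w i j` the squared moduli of the inner products
of their eigenvectors. For any functions `f`, `g` one has
`tr (f(B) g(A)) = ∑ w i j * f (p i) * g (q j)`, so the squared Frobenius distance and the Bregman
divergence of the negative von Neumann entropy are `w`-weighted sums of `(p i - q j) ^ 2` and
`p i log p i - p i log q j - p i + q j`. Comparing the summands gives a Pinsker-type inequality:
on positive semidefinite matrices of trace at most `R`, the squared distance is at most `4 R` times
the divergence. It therefore suffices to bound the linearization error of the objective by a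
multiple of the squared distance. Near `x` the traces `tr (Mᵢ z)` are bounded below, and there each
`-log` has a quadratic upper model.
-/

open Matrix
open scoped ComplexOrder

attribute [local instance] Matrix.frobeniusSeminormedAddCommGroup
attribute [local instance] Matrix.frobeniusNormedAddCommGroup

open scoped Topology

section Scalar

open InformationTheory Real

theorem sq_sqrt_sub_one_le_klFun {t : ℝ} (ht : 0 ≤ t) : (√t - 1) ^ 2 ≤ klFun t := by
  rcases ht.eq_or_lt with rfl | ht
  · simp [klFun_zero]
  obtain ⟨s, hs, rfl⟩ : ∃ s : ℝ, 0 < s ∧ s ^ 2 = t := ⟨√t, sqrt_pos.2 ht, sq_sqrt ht.le⟩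
  have hlog : 2 * s ^ 2 * (1 - s⁻¹) ≤ 2 * s ^ 2 * log s :=
    mul_le_mul_of_nonneg_left (one_sub_inv_le_log_of_pos hs) (by positivity)
  have hcancel : 2 * s ^ 2 * (1 - s⁻¹) = 2 * s ^ 2 - 2 * s := by field_simp
  rw [klFun_apply, sqrt_sq hs.le, log_pow]
  push_cast
  linarith

theorem sq_sub_one_le_klFun {t : ℝ} (ht : 0 ≤ t) : (t - 1) ^ 2 ≤ 2 * (t + 1) * klFun t := by
  have hsum : (√t + 1) ^ 2 ≤ 2 * (t + 1) := by nlinarith [sq_nonneg (√t - 1), sq_sqrt ht]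
  calc (t - 1) ^ 2 = (√t + 1) ^ 2 * (√t - 1) ^ 2 := by
        rw [← mul_pow, ← sq_sub_sq, sq_sqrt ht, one_pow]
    _ ≤ 2 * (t + 1) * klFun t :=
        mul_le_mul hsum (sq_sqrt_sub_one_le_klFun ht) (sq_nonneg _) (by positivity)

theorem mul_klFun_div {p q : ℝ} (hp : 0 ≤ p) (hq : 0 < q) :
    q * klFun (p / q) = p * log p - p * log q - p + q := by
  rcases hp.eq_or_lt with rfl | hp
  · simp [klFun_zero]
  rw [klFun_apply, log_div hp.ne' hq.ne']
  field_simp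
  ring

theorem sq_sub_le_mul_log_sub_mul_log {p q : ℝ} (hp : 0 ≤ p) (hq : 0 < q) :
    (p - q) ^ 2 ≤ 2 * (p + q) * (p * log p - p * log q - p + q) :=
  calc (p - q) ^ 2 = q ^ 2 * (p / q - 1) ^ 2 := by field_simp
    _ ≤ q ^ 2 * (2 * (p / q + 1) * klFun (p / q)) :=
        mul_le_mul_of_nonneg_left (sq_sub_one_le_klFun (by positivity)) (by positivity)
    _ = 2 * (p + q) * (q * klFun (p / q)) := by field_simp
    _ = 2 * (p + q) * (p * log p - p * log q - p + q) := by rw [mul_klFun_div hp hq]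

theorem neg_log_le_quadratic {a b c : ℝ} (hc : 0 < c) (ha : c ≤ a) (hb : c ≤ b) :
    -log b ≤ -log a - a⁻¹ * (b - a) + (b - a) ^ 2 / c ^ 2 := by
  have ha₀ : 0 < a := hc.trans_le ha
  have hb₀ : 0 < b := hc.trans_le hb
  have hlog : log a - log b ≤ a / b - 1 :=
    log_div ha₀.ne' hb₀.ne' ▸ log_le_sub_one_of_pos (div_pos ha₀ hb₀)
  have hsplit : a / b - 1 = -(a⁻¹ * (b - a)) + (b - a) ^ 2 / (a * b) := by field_simp; ring
  have hprod : c ^ 2 ≤ a * b := sq c ▸ mul_le_mul ha hb hc.le ha₀.le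
  have hquot : (b - a) ^ 2 / (a * b) ≤ (b - a) ^ 2 / c ^ 2 := by gcongr
  linarith

variable {E ι : Type*} [SeminormedAddCommGroup E] [NormedSpace ℝ E]

theorem neg_log_apply_le_quadratic (φ : E →L[ℝ] ℝ) {c : ℝ} (hc : 0 < c) {y z : E}
    (hy : c ≤ φ y) (hz : c ≤ φ z) :
    -log (φ z) ≤ -log (φ y) - (φ y)⁻¹ * φ (z - y) + ‖φ‖ ^ 2 / c ^ 2 * ‖z - y‖ ^ 2 := by
  have hφ : φ (z - y) ^ 2 ≤ (‖φ‖ * ‖z - y‖) ^ 2 := sq_le_sq' (neg_le_of_abs_le (φ.le_opNorm _))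
    (le_of_abs_le (φ.le_opNorm _))
  calc -log (φ z) ≤ -log (φ y) - (φ y)⁻¹ * φ (z - y) + φ (z - y) ^ 2 / c ^ 2 := by
        rw [map_sub]; exact neg_log_le_quadratic hc hy hz
    _ ≤ -log (φ y) - (φ y)⁻¹ * φ (z - y) + (‖φ‖ * ‖z - y‖) ^ 2 / c ^ 2 := by gcongr
    _ = _ := by ring

theorem exists_neg_sum_log_apply_le_quadratic [Fintype ι] (φ : ι → E →L[ℝ] ℝ) {x : E}
    (hx : ∀ i, 0 < φ i x) :
    ∃ K > (0 : ℝ), ∃ U ∈ 𝓝 x, ∀ y ∈ U, ∀ z ∈ U,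
      -∑ i, log (φ i z) ≤
        -∑ i, log (φ i y) - ∑ i, (φ i y)⁻¹ * φ i (z - y) + K * ‖z - y‖ ^ 2 := by
  have hU : ∀ᶠ z in 𝓝 x, ∀ i, φ i x / 2 ≤ φ i z := Filter.eventually_all.2 fun i =>
    (φ i).continuous.continuousAt.eventually_const_le (half_lt_self (hx i))
  refine ⟨∑ i, ‖φ i‖ ^ 2 / (φ i x / 2) ^ 2 + 1, by positivity, _, hU, fun y hy z hz => ?_⟩
  have hsum := Finset.sum_le_sum fun i (_ : i ∈ Finset.univ) =>
    neg_log_apply_le_quadratic (φ i) (half_pos (hx i)) (hy i) (hz i)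
  simp only [Finset.sum_add_distrib, Finset.sum_sub_distrib, Finset.sum_neg_distrib,
    ← Finset.sum_mul] at hsum
  linarith [sq_nonneg ‖z - y‖]

end Scalar

section Spectral

variable {m n 𝕜 : Type*} [Fintype m] [Fintype n] [RCLike 𝕜]

theorem frobenius_norm_sq_eq_re_trace (A : Matrix m n 𝕜) :
    ‖A‖ ^ 2 = RCLike.re (Aᴴ * A).trace := by
  rw [frobenius_norm_def, ← Real.sqrt_eq_rpow, Real.sq_sqrt (by positivity), Finset.sum_comm]
  simp only [trace, diag, mul_apply, conjTranspose_apply, map_sum, Real.rpow_two, RCLike.star_def,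
    RCLike.conj_mul, ← RCLike.ofReal_pow, RCLike.ofReal_re]

theorem re_trace_conjTranspose_mul_of_isHermitian (G : Matrix n n 𝕜) {H : Matrix n n 𝕜}
    (hH : H.IsHermitian) : RCLike.re (Gᴴ * H).trace = RCLike.re (G * H).trace := by
  rw [← RCLike.conj_re, ← RCLike.star_def, ← trace_conjTranspose, conjTranspose_mul,
    conjTranspose_conjTranspose, hH.eq, trace_mul_comm]

variable [DecidableEq n] {A B : Matrix n n 𝕜}

/-- The transition probability `|⟨uᵢ, vⱼ⟩|²` between the `i`-th eigenvector `uᵢ` of `A` and the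
`j`-th eigenvector `vⱼ` of `B`, for the orthonormal eigenbases fixed by `eigenvectorUnitary`.
These are the weights that couple the two spectra in `re_trace_cfc_mul_cfc`. -/
noncomputable def eigenvectorOverlap (hA : A.IsHermitian) (hB : B.IsHermitian) (i j : n) : ℝ :=
  ‖(star (hA.eigenvectorUnitary : Matrix n n 𝕜) * (hB.eigenvectorUnitary : Matrix n n 𝕜)) i j‖ ^ 2

theorem eigenvectorOverlap_nonneg (hA : A.IsHermitian) (hB : B.IsHermitian) (i j : n) :
    0 ≤ eigenvectorOverlap hA hB i j :=
  sq_nonneg _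

theorem trace_conj_diagonal_mul_conj_diagonal (U V : Matrix n n 𝕜) (p q : n → 𝕜) :
    (U * diagonal p * star U * (V * diagonal q * star V)).trace =
      ∑ i, ∑ j, (‖(star U * V) i j‖ ^ 2 : 𝕜) * (p i * q j) := by
  have hcyclic : (U * diagonal p * star U * (V * diagonal q * star V)).trace =
      (diagonal p * (star U * V) * diagonal q * star (star U * V)).trace := by
    rw [star_mul, star_star, ← trace_mul_comm (star V * U)]
    simp only [← mul_assoc]
    rw [trace_mul_comm]
    simp only [← mul_assoc]
  rw [hcyclic]
  simp only [trace, diag, mul_apply (N := star _), mul_diagonal, diagonal_mul, star_apply]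
  refine Finset.sum_congr rfl fun i _ => Finset.sum_congr rfl fun j _ => ?_
  rw [← RCLike.mul_conj, RCLike.star_def]
  ring

theorem re_trace_cfc_mul_cfc (hA : A.IsHermitian) (hB : B.IsHermitian) (f g : ℝ → ℝ) :
    RCLike.re (cfc f A * cfc g B).trace =
      ∑ i, ∑ j, eigenvectorOverlap hA hB i j * (f (hA.eigenvalues i) * g (hB.eigenvalues j)) := by
  simp only [hA.cfc_eq, hB.cfc_eq, IsHermitian.cfc, Unitary.conjStarAlgAut_apply,
    trace_conj_diagonal_mul_conj_diagonal, Function.comp_apply, eigenvectorOverlap]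
  norm_cast

theorem re_trace_mul_cfc (hA : A.IsHermitian) (hB : B.IsHermitian) (g : ℝ → ℝ) :
    RCLike.re (A * cfc g B).trace =
      ∑ i, ∑ j, eigenvectorOverlap hA hB i j * (hA.eigenvalues i * g (hB.eigenvalues j)) := by
  simpa only [cfc_id ℝ A hA.isSelfAdjoint, id] using re_trace_cfc_mul_cfc hA hB id g

theorem re_trace_cfc_left (hA : A.IsHermitian) (hB : B.IsHermitian) (f : ℝ → ℝ) :
    RCLike.re (cfc f A).trace =
      ∑ i, ∑ j, eigenvectorOverlap hA hB i j * f (hA.eigenvalues i) := by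
  simpa only [cfc_const_one ℝ B hB.isSelfAdjoint, mul_one] using
    re_trace_cfc_mul_cfc hA hB f fun _ => 1

theorem re_trace_cfc_right (hA : A.IsHermitian) (hB : B.IsHermitian) (g : ℝ → ℝ) :
    RCLike.re (cfc g B).trace =
      ∑ i, ∑ j, eigenvectorOverlap hA hB i j * g (hB.eigenvalues j) := by
  simpa only [cfc_const_one ℝ A hA.isSelfAdjoint, one_mul] using
    re_trace_cfc_mul_cfc hA hB (fun _ => 1) g

theorem mul_self_eq_cfc (hA : A.IsHermitian) : A * A = cfc (fun p : ℝ => p ^ 2) A := by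
  rw [cfc_pow_id A 2 hA.isSelfAdjoint, sq]

theorem mul_cfc_self (hA : A.IsHermitian) (f : ℝ → ℝ) : A * cfc f A = cfc (fun p => p * f p) A := by
  rw [cfc_mul _ _ A (by fun_prop) (finite_real_spectrum.continuousOn f),
    cfc_id' ℝ A hA.isSelfAdjoint]

theorem frobenius_norm_sub_sq_eq_sum (hA : A.IsHermitian) (hB : B.IsHermitian) :
    ‖A - B‖ ^ 2 = ∑ i, ∑ j,
      eigenvectorOverlap hA hB i j * (hA.eigenvalues i - hB.eigenvalues j) ^ 2 := by
  have hAA := re_trace_cfc_left hA hB fun p => p ^ 2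
  have hBB := re_trace_cfc_right hA hB fun q => q ^ 2
  have hAB := re_trace_mul_cfc hA hB id
  rw [← mul_self_eq_cfc hA] at hAA
  rw [← mul_self_eq_cfc hB] at hBB
  rw [cfc_id ℝ B hB.isSelfAdjoint] at hAB
  rw [frobenius_norm_sq_eq_re_trace, (hA.sub hB).eq, mul_sub, sub_mul, sub_mul, trace_sub,
    trace_sub, trace_sub, trace_mul_comm B A, map_sub, map_sub, map_sub, hAA, hBB, hAB]
  simp only [← Finset.sum_sub_distrib, id]
  refine Finset.sum_congr rfl fun i _ => Finset.sum_congr rfl fun j _ => ?_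
  ring

/-- The Bregman divergence `D_h(B, A)` of the negative von Neumann entropy `h(X) = Re tr (X log X)`,
for positive semidefinite `B` and positive definite `A`. Matrices of different trace are allowed,
whence the last two terms. For singular `B` the convention `Real.log 0 = 0` yields the
usual `0 log 0 = 0`. -/
noncomputable def entropyBregman (B A : Matrix n n 𝕜) : ℝ :=
  RCLike.re (B * (cfc Real.log B - cfc Real.log A)).trace - RCLike.re B.trace + RCLike.re A.trace

theorem entropyBregman_of_trace_eq (h : B.trace = A.trace) :
    entropyBregman B A = RCLike.re (B * (cfc Real.log B - cfc Real.log A)).trace := by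
  rw [entropyBregman, h, sub_add_cancel]

theorem entropyBregman_eq_sum (hB : B.IsHermitian) (hA : A.IsHermitian) :
    entropyBregman B A = ∑ i, ∑ j, eigenvectorOverlap hB hA i j *
      (hB.eigenvalues i * Real.log (hB.eigenvalues i)
        - hB.eigenvalues i * Real.log (hA.eigenvalues j)
        - hB.eigenvalues i + hA.eigenvalues j) := by
  have htrB := re_trace_cfc_left hB hA id
  have htrA := re_trace_cfc_right hB hA id
  rw [cfc_id ℝ B hB.isSelfAdjoint] at htrB
  rw [cfc_id ℝ A hA.isSelfAdjoint] at htrA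
  rw [entropyBregman, mul_sub, trace_sub, map_sub, mul_cfc_self hB, re_trace_cfc_left hB hA,
    re_trace_mul_cfc hB hA, htrB, htrA]
  simp only [mul_add, mul_sub, Finset.sum_add_distrib, Finset.sum_sub_distrib, id]

theorem eigenvalues_le_re_trace (hA : A.PosSemidef) (i : n) :
    hA.isHermitian.eigenvalues i ≤ RCLike.re A.trace := by
  rw [hA.isHermitian.trace_eq_sum_eigenvalues, map_sum]
  simp only [RCLike.ofReal_re]
  exact Finset.single_le_sum (fun j _ => hA.eigenvalues_nonneg j) (Finset.mem_univ i)

theorem frobenius_norm_sub_sq_le_entropyBregman {R : ℝ} (hB : B.PosSemidef) (hA : A.PosDef)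
    (hBR : RCLike.re B.trace ≤ R) (hAR : RCLike.re A.trace ≤ R) :
    ‖B - A‖ ^ 2 ≤ 4 * R * entropyBregman B A := by
  rw [frobenius_norm_sub_sq_eq_sum hB.isHermitian hA.isHermitian,
    entropyBregman_eq_sum hB.isHermitian hA.isHermitian, Finset.mul_sum]
  refine Finset.sum_le_sum fun i _ => ?_
  rw [Finset.mul_sum]
  refine Finset.sum_le_sum fun j _ => ?_
  rw [mul_left_comm]
  refine mul_le_mul_of_nonneg_left ?_ (eigenvectorOverlap_nonneg _ _ i j)
  have hp := hB.eigenvalues_nonneg i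
  have hq := hA.eigenvalues_pos j
  have hpR := (eigenvalues_le_re_trace hB i).trans hBR
  have hqR := (eigenvalues_le_re_trace hA.posSemidef j).trans hAR
  refine (sq_sub_le_mul_log_sub_mul_log hp hq).trans (mul_le_mul_of_nonneg_right (by linarith) ?_)
  rw [← mul_klFun_div hp hq]
  exact mul_nonneg hq.le (InformationTheory.klFun_nonneg (div_nonneg hp hq.le))

end Spectral

section Tomography

attribute [local instance] Matrix.frobeniusNormedSpace

variable {ι n 𝕜 : Type*} [Fintype ι] [Fintype n] [RCLike 𝕜]

/-- The pairing `Z ↦ Re tr (M Z)` with a fixed matrix `M`, as a continuous real functional. -/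
noncomputable def reTraceMulCLM (M : Matrix n n 𝕜) : Matrix n n 𝕜 →L[ℝ] ℝ :=
  LinearMap.toContinuousLinearMap
    (RCLike.reLm ∘ₗ traceLinearMap n ℝ 𝕜 ∘ₗ LinearMap.mulLeft ℝ M)

/-- The quantum state tomography objective `f_QST(z) = -∑ᵢ log tr (Mᵢ z)`, on all matrices through
the real part of the trace. -/
noncomputable def qstLoss (M : ι → Matrix n n 𝕜) (z : Matrix n n 𝕜) : ℝ :=
  -∑ i, Real.log (RCLike.re (M i * z).trace)

/-- The gradient `-∑ᵢ Mᵢ / tr (Mᵢ z)` of `qstLoss M` for the inner product `Re tr (Aᴴ B)`. For `Mᵢ`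
that are not Hermitian it is not the gradient itself, but its pairing with any Hermitian direction
is still the derivative. -/
noncomputable def qstGrad (M : ι → Matrix n n 𝕜) (z : Matrix n n 𝕜) : Matrix n n 𝕜 :=
  -∑ i, (RCLike.re (M i * z).trace)⁻¹ • M i

theorem re_trace_qstGrad_conjTranspose_mul (M : ι → Matrix n n 𝕜) (z : Matrix n n 𝕜)
    {H : Matrix n n 𝕜} (hH : H.IsHermitian) :
    RCLike.re ((qstGrad M z)ᴴ * H).trace =
      -∑ i, (RCLike.re (M i * z).trace)⁻¹ * RCLike.re (M i * H).trace := by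
  rw [re_trace_conjTranspose_mul_of_isHermitian _ hH]
  simp [qstGrad, Finset.sum_mul, trace_sum, RCLike.smul_re]

theorem exists_qstLoss_le_quadratic (M : ι → Matrix n n 𝕜) {x : Matrix n n 𝕜}
    (hx : ∀ i, 0 < RCLike.re (M i * x).trace) :
    ∃ K > (0 : ℝ), ∃ U ∈ 𝓝 x, ∀ y ∈ U, ∀ z ∈ U, (z - y).IsHermitian →
      qstLoss M z ≤
        qstLoss M y + RCLike.re ((qstGrad M y)ᴴ * (z - y)).trace + K * ‖z - y‖ ^ 2 := by
  obtain ⟨K, hK, U, hU, hle⟩ :=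
    exists_neg_sum_log_apply_le_quadratic (fun i => reTraceMulCLM (M i)) hx
  refine ⟨K, hK, U, hU, fun y hy z hz hzy => ?_⟩
  rw [re_trace_qstGrad_conjTranspose_mul M y hzy, ← sub_eq_add_neg]
  exact hle y hy z hz

theorem exists_eventually_re_trace_le (x : Matrix n n 𝕜) :
    ∃ R > (0 : ℝ), ∀ᶠ z in 𝓝 x, RCLike.re z.trace ≤ R := by
  obtain ⟨R, hR⟩ := exists_gt (max 0 (RCLike.re x.trace))
  obtain ⟨hR₀, hxR⟩ := max_lt_iff.1 hR
  refine ⟨R, hR₀, ?_⟩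
  have hcont : Continuous fun z : Matrix n n 𝕜 => RCLike.re z.trace := by fun_prop
  exact hcont.continuousAt.eventually_le_const hxR

theorem stmt16_general [DecidableEq n] (M : ι → Matrix n n 𝕜) (x : Matrix n n 𝕜)
    (hx : ∀ i, 0 < RCLike.re (M i * x).trace) :
    ∃ L > (0 : ℝ), ∃ ε > (0 : ℝ), ∀ z₁ z₂ : Matrix n n 𝕜, z₁.PosDef → z₂.PosSemidef →
      ‖z₁ - x‖ < ε → ‖z₂ - x‖ < ε →
        qstLoss M z₂ ≤ qstLoss M z₁ + RCLike.re ((qstGrad M z₁)ᴴ * (z₂ - z₁)).trace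
          + L * entropyBregman z₂ z₁ := by
  obtain ⟨K, hK, U, hU, hle⟩ := exists_qstLoss_le_quadratic M hx
  obtain ⟨R, hR, htrace⟩ := exists_eventually_re_trace_le x
  obtain ⟨ε, hε, hball⟩ := Metric.mem_nhds_iff.1 (Filter.inter_mem hU htrace)
  refine ⟨K * (4 * R), by positivity, ε, hε, fun z₁ z₂ h₁ h₂ hz₁ hz₂ => ?_⟩
  obtain ⟨hU₁, hR₁⟩ := hball (mem_ball_iff_norm.2 hz₁)
  obtain ⟨hU₂, hR₂⟩ := hball (mem_ball_iff_norm.2 hz₂)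
  refine (hle z₁ hU₁ z₂ hU₂ (h₂.isHermitian.sub h₁.isHermitian)).trans ?_
  rw [mul_assoc]
  gcongr
  exact frobenius_norm_sub_sq_le_entropyBregman h₂ h₁ hR₂ hR₁

end Tomography

/-- The QST objective is locally smooth relative to the negative von
Neumann entropy on the set of density matrices.
Let `M₁, …, M_n` be PSD `d × d` complex matrices and
`f_QST(x) := −Σᵢ log tr(Mᵢ x)`, with gradient `∇f_QST(z) = −Σᵢ Mᵢ / tr(Mᵢ z)` and real
inner product `⟨A, B⟩ = Re tr(Aᴴ B)` (Frobenius norm balls).  For every density matrix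
`x` with `tr(Mᵢ x) > 0` for all `i`, there are `L_x > 0`, `ε_x > 0` such that for all
positive-definite density matrices `z₁, z₂ ∈ B(x, ε_x)` with `tr(Mᵢ z_l) > 0`,
`f_QST(z₂) ≤ f_QST(z₁) + ⟨∇f_QST(z₁), z₂ − z₁⟩ + L_x · Re tr(z₂(log z₂ − log z₁))`,
where `log` is the continuous functional calculus of the real logarithm. -/
theorem stmt16 (d n : ℕ) (M : Fin n → Matrix (Fin d) (Fin d) ℂ)
    (hM : ∀ i, (M i).PosSemidef) :
    ∀ x : Matrix (Fin d) (Fin d) ℂ, x.PosSemidef → x.trace = 1 →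
      (∀ i, 0 < (Matrix.trace (M i * x)).re) →
      ∃ L > (0 : ℝ), ∃ ε > (0 : ℝ),
        ∀ z₁ z₂ : Matrix (Fin d) (Fin d) ℂ,
          ∀ (h₁ : z₁.PosDef) (h₂ : z₂.PosDef),
          z₁.trace = 1 → ‖z₁ - x‖ < ε →
            (∀ i, 0 < (Matrix.trace (M i * z₁)).re) →
          z₂.trace = 1 → ‖z₂ - x‖ < ε →
            (∀ i, 0 < (Matrix.trace (M i * z₂)).re) →
          (-∑ i, Real.log (Matrix.trace (M i * z₂)).re)
            ≤ (-∑ i, Real.log (Matrix.trace (M i * z₁)).re)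
              + (Matrix.trace
                  ((-∑ i, ((Matrix.trace (M i * z₁)).re)⁻¹ • M i)ᴴ * (z₂ - z₁))).re
              + L * (Matrix.trace
                  (z₂ * (h₂.isHermitian.cfc Real.log - h₁.isHermitian.cfc Real.log))).re := by
  intro x _ _ hx
  obtain ⟨L, hL, ε, hε, h⟩ := stmt16_general M x hx
  refine ⟨L, hL, ε, hε, fun z₁ z₂ h₁ h₂ ht₁ hz₁ _ ht₂ hz₂ _ => ?_⟩
  rw [← h₁.isHermitian.cfc_eq, ← h₂.isHermitian.cfc_eq]
  exact (h z₁ z₂ h₁ h₂.posSemidef hz₁ hz₂).trans_eq <|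
    congrArg (_ + L * ·) (entropyBregman_of_trace_eq (ht₂.trans ht₁.symm))
end
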